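/- arXiv:1207.3739 — 4 statements merged into one kernel-verified Lean document; each statement's English description precedes it below -/
import Mathlib

section
/- Let A be a finite-dimensional left Leibniz algebra and N a nilpotent ideal of A. Then A is nilpotent if and only if the quotient A/N² is nilpotent. -/
open Polynomial LinearMap

/-- A (left) Leibniz algebra structure on the `K`-vector space `A`:
a bilinear multiplication satisfying `x(yz) = (xy)z + y(xz)`. -/
structure LeibnizMul (K A : Type*) [Field K] [AddCommGroup A] [Module K A] where
  mul : A →ₗ[K] A →ₗ[K] A
  leibniz : ∀ x y z, mul x (mul y z) = mul (mul x y) z + mul y (mul x z)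

namespace LeibnizMul

variable {K A : Type*} [Field K] [AddCommGroup A] [Module K A]

/-- The product of two subspaces: the span of all products `s·t`, `s ∈ S`, `t ∈ T`. -/
def mulSub (m : LeibnizMul K A) (S T : Submodule K A) : Submodule K A :=
  Submodule.span K (Set.image2 (fun x y => m.mul x y) (S : Set A) (T : Set A))

/-- Relative lower central series of the subalgebra `S`: `lcsIn m S n = S^(n+1)`,
i.e. `lcsIn m S 0 = S` and `lcsIn m S (n+1) = S · (lcsIn m S n)`. -/
def lcsIn (m : LeibnizMul K A) (S : Submodule K A) : ℕ → Submodule K A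
  | 0 => S
  | (n+1) => m.mulSub S (m.lcsIn S n)

/-- `A` is nilpotent: some term of the lower central series vanishes. -/
def IsNilpotent (m : LeibnizMul K A) : Prop := ∃ n, m.lcsIn ⊤ n = ⊥

/-- `S` is a subalgebra: a subspace closed under multiplication. -/
def IsSubalg (m : LeibnizMul K A) (S : Submodule K A) : Prop :=
  ∀ x ∈ S, ∀ y ∈ S, m.mul x y ∈ S

/-- `S` is a (two-sided) ideal. -/
def IsIdeal (m : LeibnizMul K A) (S : Submodule K A) : Prop :=
  ∀ (x : A), ∀ y ∈ S, m.mul x y ∈ S ∧ m.mul y x ∈ S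

/-- `M` is a maximal (proper) subalgebra. -/
def IsMaxSubalg (m : LeibnizMul K A) (M : Submodule K A) : Prop :=
  m.IsSubalg M ∧ M ≠ ⊤ ∧ ∀ S, m.IsSubalg S → M < S → S = ⊤

/-- The Frattini subalgebra: the intersection of all maximal subalgebras. -/
def frattini (m : LeibnizMul K A) : Submodule K A :=
  sInf {M | m.IsMaxSubalg M}

/-- The subalgebra generated by a single element `a`. -/
def subalgGen (m : LeibnizMul K A) (a : A) : Submodule K A :=
  sInf {S | m.IsSubalg S ∧ a ∈ S}

/-- The normal closure of a subspace: the smallest ideal containing it. -/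
def normalClosure (m : LeibnizMul K A) (S : Submodule K A) : Submodule K A :=
  sInf {I | m.IsIdeal I ∧ S ≤ I}

/-- The normalizer of a subspace `C`: all `x` with `x·c ∈ C` and `c·x ∈ C` for all `c ∈ C`. -/
def normalizer (m : LeibnizMul K A) (C : Submodule K A) : Submodule K A :=
  ⨅ c : C, (Submodule.comap (m.mul.flip (c : A)) C ⊓ Submodule.comap (m.mul (c : A)) C)

/-- The center of the subalgebra `S`: all `z ∈ S` with `z·x = x·z = 0` for all `x ∈ S`. -/
def centerIn (m : LeibnizMul K A) (S : Submodule K A) : Submodule K A :=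
  S ⊓ ⨅ x : S, (LinearMap.ker (m.mul.flip (x : A)) ⊓ LinearMap.ker (m.mul (x : A)))

/-- All `z ∈ S` with `z·x ∈ T` and `x·z ∈ T` for all `x ∈ S`. -/
def relCentralizer (m : LeibnizMul K A) (S T : Submodule K A) : Submodule K A :=
  S ⊓ ⨅ x : S, (Submodule.comap (m.mul.flip (x : A)) T ⊓ Submodule.comap (m.mul (x : A)) T)

/-- The upper central series of the subalgebra `S`:
`Z₀ = 0`, `Z_{j+1} = {z ∈ S : zS ⊆ Z_j and Sz ⊆ Z_j}`. -/
def ucsIn (m : LeibnizMul K A) (S : Submodule K A) : ℕ → Submodule K A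
  | 0 => ⊥
  | (j+1) => m.relCentralizer S (m.ucsIn S j)

/-- The right center `{r : A·r = 0}`. -/
def rightCenter (m : LeibnizMul K A) : Submodule K A := LinearMap.ker m.mul.flip

/-- Left-normed powers of `a`: `lpow m a k = a^(k+1)`. -/
def lpow (m : LeibnizMul K A) (a : A) : ℕ → A
  | 0 => a
  | (k+1) => m.mul a (m.lpow a k)

/-- The Fitting null component of left multiplication by `a`. -/
def fittingNull (m : LeibnizMul K A) (a : A) : Submodule K A :=
  ⨆ k, LinearMap.ker ((m.mul a) ^ k)

end LeibnizMul

/-! Let `L S = A · S`, so that the terms of the lower central series of `A` are the iterates `Lⁿ A`.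
By the Leibniz identity `L` acts on products of subspaces like a derivation, hence `Lⁿ (S · T)` is
contained in the sum of the `(Lⁱ S) · (Lʲ T)` with `i + j = n`. If `Lⁿ A ⊆ N²`, then
`Lⁿ N ⊆ N²`, and expanding powers of `L` on `N^(k+1) = N · N^k` shows by induction on `k` that
`k * n` applications of `L` take `N^k` into `N^(k+1)`: if at least `n` of them fall on the factor
`N`, they produce `N² · N^k ⊆ N^(k+2)`, and otherwise enough of them fall on `N^k`. So the lower
central series of `A` descends through every term of that of `N`, and finally reaches `0`. -/

namespace LeibnizMul

variable {K A : Type*} [Field K] [AddCommGroup A] [Module K A] (m : LeibnizMul K A)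

theorem mulSub_eq_map₂ (S T : Submodule K A) : m.mulSub S T = Submodule.map₂ m.mul S T :=
  (Submodule.map₂_eq_span_image2 _ _ _).symm

theorem mulSub_le {S T U : Submodule K A} :
    m.mulSub S T ≤ U ↔ ∀ x ∈ S, ∀ y ∈ T, m.mul x y ∈ U := by
  rw [mulSub_eq_map₂, Submodule.map₂_le]

theorem mul_mem_mulSub {S T : Submodule K A} {x y : A} (hx : x ∈ S) (hy : y ∈ T) :
    m.mul x y ∈ m.mulSub S T :=
  m.mulSub_le.1 le_rfl x hx y hy

theorem mulSub_mono {S S' T T' : Submodule K A} (hS : S ≤ S') (hT : T ≤ T') :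
    m.mulSub S T ≤ m.mulSub S' T' :=
  m.mulSub_le.2 fun _ hx _ hy => m.mul_mem_mulSub (hS hx) (hT hy)

theorem monotone_mulSub_right (R : Submodule K A) : Monotone (m.mulSub R) :=
  fun _ _ h => m.mulSub_mono le_rfl h

theorem mulSub_iSup_right {ι : Sort*} (R : Submodule K A) (S : ι → Submodule K A) :
    m.mulSub R (⨆ i, S i) = ⨆ i, m.mulSub R (S i) := by
  simp only [mulSub_eq_map₂, Submodule.map₂_iSup_right]

theorem mulSub_mulSub_right_le (R S T : Submodule K A) :
    m.mulSub R (m.mulSub S T) ≤ m.mulSub (m.mulSub R S) T ⊔ m.mulSub S (m.mulSub R T) := by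
  refine m.mulSub_le.2 fun x hx y hy => ?_
  suffices m.mulSub S T ≤
      (m.mulSub (m.mulSub R S) T ⊔ m.mulSub S (m.mulSub R T)).comap (m.mul x) from this hy
  refine m.mulSub_le.2 fun s hs t ht => ?_
  rw [Submodule.mem_comap, m.leibniz]
  exact Submodule.add_mem_sup (m.mul_mem_mulSub (m.mul_mem_mulSub hx hs) ht)
    (m.mul_mem_mulSub hs (m.mul_mem_mulSub hx ht))

theorem mulSub_mulSub_left_le (R S T : Submodule K A) :
    m.mulSub (m.mulSub R S) T ≤ m.mulSub R (m.mulSub S T) ⊔ m.mulSub S (m.mulSub R T) := by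
  refine m.mulSub_le.2 fun y hy t ht => ?_
  suffices m.mulSub R S ≤
      (m.mulSub R (m.mulSub S T) ⊔ m.mulSub S (m.mulSub R T)).comap (m.mul.flip t) from this hy
  refine m.mulSub_le.2 fun r hr s hs => ?_
  rw [Submodule.mem_comap, LinearMap.flip_apply, eq_sub_of_add_eq (m.leibniz r s t).symm]
  exact Submodule.sub_mem_sup (m.mul_mem_mulSub hr (m.mul_mem_mulSub hs ht))
    (m.mul_mem_mulSub hs (m.mul_mem_mulSub hr ht))

theorem iterate_mulSub_mulSub_le_iSup (R S T : Submodule K A) (n : ℕ) :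
    (m.mulSub R)^[n] (m.mulSub S T) ≤
      ⨆ (i) (j) (_ : i + j = n), m.mulSub ((m.mulSub R)^[i] S) ((m.mulSub R)^[j] T) := by
  induction n with
  | zero => exact le_iSup₂_of_le 0 0 (le_iSup_of_le rfl le_rfl)
  | succ n ih =>
    rw [Function.iterate_succ_apply']
    refine (m.monotone_mulSub_right R ih).trans ?_
    simp only [mulSub_iSup_right]
    refine iSup₂_le fun i j => iSup_le fun hij => (m.mulSub_mulSub_right_le _ _ _).trans ?_
    simp only [← Function.iterate_succ_apply' (m.mulSub R)]
    exact sup_le (le_iSup₂_of_le (i + 1) j (le_iSup_of_le (by lia) le_rfl))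
      (le_iSup₂_of_le i (j + 1) (le_iSup_of_le (by lia) le_rfl))

theorem iterate_mulSub_mulSub_le_sup {R S S' T T' : Submodule K A} {p q : ℕ}
    (hRS : m.mulSub R S ≤ S) (hRT : m.mulSub R T ≤ T)
    (hS : (m.mulSub R)^[p] S ≤ S') (hT : (m.mulSub R)^[q] T ≤ T') :
    (m.mulSub R)^[p + q] (m.mulSub S T) ≤ m.mulSub S' T ⊔ m.mulSub S T' := by
  have hantiS := (m.monotone_mulSub_right R).antitone_iterate_of_map_le hRS
  have hantiT := (m.monotone_mulSub_right R).antitone_iterate_of_map_le hRT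
  refine (m.iterate_mulSub_mulSub_le_iSup R S T (p + q)).trans
    (iSup₂_le fun i j => iSup_le fun hij => ?_)
  obtain hi | hj : p ≤ i ∨ q ≤ j := by lia
  · exact le_sup_of_le_left (m.mulSub_mono ((hantiS hi).trans hS) (hantiT j.zero_le))
  · exact le_sup_of_le_right (m.mulSub_mono (hantiS i.zero_le) ((hantiT hj).trans hT))

theorem lcsIn_eq_iterate (S : Submodule K A) (n : ℕ) : m.lcsIn S n = (m.mulSub S)^[n] S := by
  induction n with
  | zero => rfl
  | succ n ih => rw [Function.iterate_succ_apply', ← ih, lcsIn]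

theorem mulSub_lcsIn_le {R N : Submodule K A} (hN : m.mulSub R N ≤ N) (k : ℕ) :
    m.mulSub R (m.lcsIn N k) ≤ m.lcsIn N k := by
  induction k with
  | zero => exact hN
  | succ k ih =>
    exact (m.mulSub_mulSub_right_le _ _ _).trans
      (sup_le (m.mulSub_mono hN le_rfl) (m.mulSub_mono le_rfl ih))

theorem mulSub_mulSub_self_lcsIn_le (N : Submodule K A) (k : ℕ) :
    m.mulSub (m.mulSub N N) (m.lcsIn N k) ≤ m.lcsIn N (k + 2) :=
  (m.mulSub_mulSub_left_le N N (m.lcsIn N k)).trans (sup_idem _).le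

theorem iterate_mulSub_lcsIn_le {R N : Submodule K A} (hN : m.mulSub R N ≤ N) {n : ℕ}
    (hn : (m.mulSub R)^[n] N ≤ m.mulSub N N) (k : ℕ) :
    (m.mulSub R)^[(k + 1) * n] (m.lcsIn N k) ≤ m.lcsIn N (k + 1) := by
  induction k with
  | zero => rwa [zero_add, one_mul]
  | succ k ih =>
    rw [Nat.succ_mul, Nat.add_comm]
    exact (m.iterate_mulSub_mulSub_le_sup hN (m.mulSub_lcsIn_le hN k) hn ih).trans
      (sup_le (m.mulSub_mulSub_self_lcsIn_le N k) le_rfl)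

theorem lcsIn_choose_mul_le_lcsIn {R N : Submodule K A} (hNR : N ≤ R) (hN : m.mulSub R N ≤ N)
    {n : ℕ} (hn : m.lcsIn R n ≤ m.mulSub N N) (k : ℕ) :
    m.lcsIn R ((k + 2).choose 2 * n) ≤ m.lcsIn N (k + 1) := by
  simp only [lcsIn_eq_iterate m R] at hn ⊢
  have hmono (r : ℕ) := (m.monotone_mulSub_right R).iterate r
  induction k with
  | zero => rwa [zero_add, Nat.choose_self, one_mul]
  | succ k ih =>
    have hchoose : (k + 1 + 2).choose 2 * n = (k + 1 + 1) * n + (k + 2).choose 2 * n := by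
      rw [Nat.choose_succ_succ' (k + 2) 1, Nat.choose_one_right, add_mul]
    rw [hchoose, Function.iterate_add_apply]
    exact (hmono _ ih).trans (m.iterate_mulSub_lcsIn_le hN ((hmono n hNR).trans hn) (k + 1))

end LeibnizMul

theorem stmt0_general {K A : Type*} [Field K] [AddCommGroup A] [Module K A]
    (m : LeibnizMul K A) (N : Submodule K A) (hN : ∀ x, ∀ y ∈ N, m.mul x y ∈ N)
    (hNnil : ∃ n, m.lcsIn N n = ⊥) :
    m.IsNilpotent ↔ ∃ n, m.lcsIn ⊤ n ≤ m.mulSub N N := by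
  refine ⟨fun ⟨n, hn⟩ => ⟨n, hn ▸ bot_le⟩, fun ⟨n, hn⟩ => ?_⟩
  have hleft : m.mulSub ⊤ N ≤ N := m.mulSub_le.2 fun x _ => hN x
  obtain ⟨c, hc⟩ := hNnil
  refine ⟨(c + 2).choose 2 * n, le_bot_iff.1 ?_⟩
  calc m.lcsIn ⊤ ((c + 2).choose 2 * n)
      ≤ m.lcsIn N (c + 1) := m.lcsIn_choose_mul_le_lcsIn le_top hleft hn c
    _ ≤ m.mulSub ⊤ (m.lcsIn N c) := m.mulSub_mono le_top le_rfl
    _ ≤ m.lcsIn N c := m.mulSub_lcsIn_le hleft c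
    _ = ⊥ := hc

/-- `A` nilpotent iff `A/N²` nilpotent.  Nilpotency of the quotient `A/N²`
is expressed equivalently by: some term of the lower central series of `A` lies in `N²`. -/
theorem stmt0 {K A : Type*} [Field K] [AddCommGroup A] [Module K A] [FiniteDimensional K A]
    (m : LeibnizMul K A) (N : Submodule K A) (hN : m.IsIdeal N)
    (hNnil : ∃ n, m.lcsIn N n = ⊥) :
    m.IsNilpotent ↔ ∃ n, m.lcsIn ⊤ n ≤ m.mulSub N N :=
  stmt0_general m N (fun x y hy => (hN x y hy).1) hNnil
end

section
/- Let A be an n-dimensional cyclic left Leibniz algebra generated by a, with a·aⁿ = α₂a² + ... + αₙaⁿ, and let p(x) = xⁿ − αₙx^{n−1} − ... − α₂x = p₁(x)^{n₁}···p_s(x)^{n_s} be the factorization into distinct irreducible factors of the characteristic polynomial of left multiplication L_a. Then the Frattini subalgebra of A equals {b ∈ A : q(L_a)(b) = 0}, where q(x) = p₁(x)^{n₁−1}···p_s(x)^{n_s−1}. -/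
open Polynomial LinearMap

/-!
Left multiplication turns products into commutators, so in a cyclic algebra every `L_b` is a scalar
multiple of `L_a`, and products act trivially from the left. A subspace which does not act trivially
from the left is therefore a subalgebra exactly when it is `L_a`-invariant, while the subspaces
which do act trivially all lie in the largest one, which is itself invariant. So the maximal
subalgebras are the maximal submodules of the `K[X]`-module in which `X` acts as `L_a`, and the
Frattini subalgebra is the Jacobson radical of this module. The module is `K[X] ⧸ (P)` with `P` the
characteristic polynomial of `L_a`, hence its Jacobson radical is `(rad P) ⧸ (P)`, which is the
kernel of multiplication by `P / rad P`.
-/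

open UniqueFactorizationMonoid (radical)
open EuclideanDomain (divRadical)

theorem comap_jacobson_eq_sInf_of_surjective {R M N : Type*} [Ring R] [AddCommGroup M] [Module R M]
    [AddCommGroup N] [Module R N] {f : M →ₗ[R] N} (hf : Function.Surjective f) :
    (Module.jacobson R N).comap f = sInf {S | LinearMap.ker f ≤ S ∧ IsCoatom S} := by
  ext x
  simp only [Module.jacobson, Submodule.mem_comap, Submodule.mem_sInf, Set.mem_ofPred_eq]
  constructor
  · rintro h S ⟨hker, hS⟩
    have hcomap : (S.map f).comap f = S := Submodule.comap_map_eq_self hker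
    rw [← hcomap] at hS ⊢
    exact h _ ((Submodule.isCoatom_comap_iff hf).1 hS)
  · exact fun h T hT => h _ ⟨LinearMap.ker_le_comap f, (Submodule.isCoatom_comap_iff hf).2 hT⟩

theorem smul_mem_jacobson_iff_of_span_singleton_eq_top {R M : Type*} [CommRing R] [AddCommGroup M]
    [Module R M] {x : M} (hx : Submodule.span R {x} = ⊤) {r : R} :
    r • x ∈ Module.jacobson R M ↔ r ∈ (Module.annihilator R M).jacobson := by
  have hsurj : Function.Surjective (LinearMap.toSpanSingleton R M x) := by
    rw [← LinearMap.range_eq_top, ← LinearMap.span_singleton_eq_range, hx]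
  have hann : Module.annihilator R M = LinearMap.ker (LinearMap.toSpanSingleton R M x) := by
    rw [← Submodule.annihilator_top, ← hx, Ideal.annihilator_span_singleton_eq_torsionOf]
    rfl
  have hcomap := comap_jacobson_eq_sInf_of_surjective hsurj
  simp only [← Ideal.isMaximal_def] at hcomap
  rw [hann, Ideal.jacobson, ← hcomap, Submodule.mem_comap, LinearMap.toSpanSingleton_apply]

theorem mem_jacobson_span_singleton_iff_radical_dvd {R : Type*} [CommRing R]
    [NormalizationMonoid R] [UniqueFactorizationMonoid R] [IsJacobsonRing R] {P r : R}
    (hP : P ≠ 0) : r ∈ (Ideal.span {P}).jacobson ↔ radical P ∣ r := by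
  rw [← Ideal.radical_eq_jacobson,
    ← UniqueFactorizationMonoid.exists_dvd_pow_iff_radical_dvd hP]
  simp only [Ideal.mem_radical_iff, Ideal.mem_span_singleton]

section DivRadical

variable {R : Type*} [EuclideanDomain R] [NormalizationMonoid R] [UniqueFactorizationMonoid R]

theorem divRadical_prod_pow_of_irreducible {ι : Type*} (s : Finset ι) {p : ι → R} {e : ι → ℕ}
    (hirr : ∀ i ∈ s, Irreducible (p i)) (hnorm : ∀ i ∈ s, normalize (p i) = p i)
    (hinj : Set.InjOn p s) (hpos : ∀ i ∈ s, e i ≠ 0) :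
    divRadical (∏ i ∈ s, p i ^ e i) = ∏ i ∈ s, p i ^ (e i - 1) := by
  have hrel : (s : Set ι).Pairwise (Function.onFun IsRelPrime fun i => p i ^ e i) :=
    fun i hi j hj hij => by
      refine ((hirr i hi).isRelPrime_iff_not_dvd.2 fun hdvd => hij (hinj hi hj ?_)).pow
      rw [← hnorm i hi, ← hnorm j hj, normalize_eq_normalize_iff_associated]
      exact (hirr i hi).associated_of_dvd (hirr j hj) hdvd
  have hrad : radical (∏ i ∈ s, p i ^ e i) = ∏ i ∈ s, p i := by
    rw [UniqueFactorizationMonoid.radical_prod s hrel]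
    exact Finset.prod_congr rfl fun i hi => by
      rw [UniqueFactorizationMonoid.radical_pow_of_prime (hirr i hi).prime (hpos i hi), hnorm i hi]
  refine (EuclideanDomain.eq_divRadical ?_).symm
  rw [hrad, ← Finset.prod_mul_distrib]
  exact Finset.prod_congr rfl fun i hi => mul_pow_sub_one (hpos i hi) _

theorem jacobson_eq_torsionBy_divRadical [IsJacobsonRing R] {M : Type*} [AddCommGroup M]
    [Module R M] {x : M} (hx : Submodule.span R {x} = ⊤) {P : R} (hP : P ≠ 0)
    (hann : Module.annihilator R M = Ideal.span {P}) :
    Module.jacobson R M = Submodule.torsionBy R M (divRadical P) := by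
  ext y
  obtain ⟨r, rfl⟩ := Submodule.mem_span_singleton.1 (Submodule.eq_top_iff'.1 hx y)
  have hzero (t : R) : t • x = 0 ↔ P ∣ t := by
    rw [← Ideal.mem_span_singleton, ← hann, ← Submodule.annihilator_top, ← hx,
      Submodule.mem_annihilator_span_singleton]
  rw [smul_mem_jacobson_iff_of_span_singleton_eq_top hx, hann,
    mem_jacobson_span_singleton_iff_radical_dvd hP, Submodule.mem_torsionBy_iff, smul_smul, hzero]
  nth_rw 2 [← EuclideanDomain.divRadical_mul_radical (a := P)]
  rw [mul_dvd_mul_iff_left (EuclideanDomain.divRadical_ne_zero hP)]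

end DivRadical

section AEval

variable {K V : Type*} [Field K] [AddCommGroup V] [Module K V]

/-- The correspondence between `L`-invariant subspaces and `K[X]`-submodules of `Module.AEval' L`.
It is `Module.AEval.mapSubmodule` with invariance expressed by `L` itself rather than by the action
`Algebra.lsmul K K V L`, which agrees with `L` only definitionally. -/
noncomputable def invtSubmoduleOrderIso (L : Module.End K V) :
    L.invtSubmodule ≃o Submodule K[X] (Module.AEval' L) :=
  Module.AEval.mapSubmodule K V L

theorem of_mem_invtSubmoduleOrderIso {L : Module.End K V} {S : L.invtSubmodule} {v : V} :
    Module.AEval'.of L v ∈ invtSubmoduleOrderIso L S ↔ v ∈ (S : Submodule K V) :=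
  Module.AEval.mem_mapSubmodule_apply K V L

theorem minpoly_eq_charpoly_of_span_singleton_eq_top [FiniteDimensional K V]
    {L : Module.End K V} {x : Module.AEval' L} (hx : Submodule.span K[X] {x} = ⊤) :
    minpoly K L = L.charpoly := by
  have htors : Ideal.torsionOf K[X] (Module.AEval' L) x = Ideal.span {minpoly K L} := by
    rw [← Ideal.annihilator_span_singleton_eq_torsionOf, hx, Submodule.annihilator_top,
      span_minpoly_eq_annihilator]
  have equiv : (K[X] ⧸ Ideal.span {minpoly K L}) ≃ₗ[K] V :=
    ((Submodule.quotEquivOfEq _ _ htors.symm ≪≫ₗ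
      Ideal.quotTorsionOfEquivSpanSingleton K[X] (Module.AEval' L) x ≪≫ₗ
      LinearEquiv.ofTop _ hx).restrictScalars K) ≪≫ₗ (Module.AEval'.of L).symm
  refine (eq_of_monic_of_dvd_of_natDegree_le (minpoly.monic (Algebra.IsIntegral.isIntegral L))
    L.charpoly_monic (LinearMap.minpoly_dvd_charpoly L) ?_).symm
  rw [LinearMap.charpoly_natDegree, ← equiv.finrank_eq, finrank_quotient_span_eq_natDegree]

end AEval

namespace LeibnizMul

variable {K A : Type*} [Field K] [AddCommGroup A] [Module K A] (m : LeibnizMul K A)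

theorem mul_mul (x y : A) : m.mul (m.mul x y) = ⁅m.mul x, m.mul y⁆ := by
  ext z
  exact eq_sub_of_add_eq (m.leibniz x y z).symm

theorem mul_mul_eq_zero_of_mem_span_singleton {x y : A} {f : Module.End K A}
    (hx : m.mul x ∈ K ∙ f) (hy : m.mul y ∈ K ∙ f) : m.mul (m.mul x y) = 0 := by
  obtain ⟨c, hc⟩ := Submodule.mem_span_singleton.1 hx
  obtain ⟨d, hd⟩ := Submodule.mem_span_singleton.1 hy
  rw [mul_mul, ← hc, ← hd]
  exact (((Commute.refl f).smul_left c).smul_right d).lie_eq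

variable {m} {a : A}

theorem IsSubalg.eq_top_of_mem (hcyc : m.subalgGen a = ⊤) {S : Submodule K A} (hS : m.IsSubalg S)
    (ha : a ∈ S) : S = ⊤ :=
  top_le_iff.1 (hcyc ▸ sInf_le ⟨hS, ha⟩)

theorem mul_mem_span_mul (hcyc : m.subalgGen a = ⊤) (b : A) : m.mul b ∈ K ∙ m.mul a := by
  have hsub : m.IsSubalg ((K ∙ m.mul a).comap m.mul) := fun x hx y hy => by
    rw [Submodule.mem_comap, m.mul_mul_eq_zero_of_mem_span_singleton hx hy]
    exact Submodule.zero_mem _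
  have htop := hsub.eq_top_of_mem hcyc (Submodule.mem_span_singleton_self (m.mul a))
  exact Submodule.eq_top_iff'.1 htop b

theorem mul_mul_eq_zero (hcyc : m.subalgGen a = ⊤) (x y : A) : m.mul (m.mul x y) = 0 :=
  m.mul_mul_eq_zero_of_mem_span_singleton (mul_mem_span_mul hcyc x) (mul_mem_span_mul hcyc y)

theorem isSubalg_of_mem_invtSubmodule (hcyc : m.subalgGen a = ⊤) {S : Submodule K A}
    (hS : S ∈ Module.End.invtSubmodule (m.mul a)) : m.IsSubalg S := fun x _ y hy => by
  obtain ⟨c, hc⟩ := Submodule.mem_span_singleton.1 (mul_mem_span_mul hcyc x)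
  rw [← hc]
  exact S.smul_mem c (hS hy)

theorem ker_mul_mem_invtSubmodule (hcyc : m.subalgGen a = ⊤) :
    LinearMap.ker m.mul ∈ Module.End.invtSubmodule (m.mul a) :=
  fun x _ => mul_mul_eq_zero hcyc a x

theorem IsSubalg.mem_invtSubmodule_of_not_le_ker_mul (hcyc : m.subalgGen a = ⊤)
    {S : Submodule K A} (hS : m.IsSubalg S) (hle : ¬ S ≤ LinearMap.ker m.mul) :
    S ∈ Module.End.invtSubmodule (m.mul a) := by
  obtain ⟨b, hbS, hb⟩ := SetLike.not_le_iff_exists.1 hle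
  obtain ⟨c, hc⟩ := Submodule.mem_span_singleton.1 (mul_mem_span_mul hcyc b)
  have hc0 : c ≠ 0 := fun h => hb (by rw [LinearMap.mem_ker, ← hc, h, zero_smul])
  intro x hx
  have hbx := hS b hbS x hx
  rwa [← hc, LinearMap.smul_apply, S.smul_mem_iff hc0] at hbx

theorem IsSubalg.lt_ker_mul_and_lt_top_of_notMem_invtSubmodule (hcyc : m.subalgGen a = ⊤)
    {S : Submodule K A} (hS : m.IsSubalg S) (hinv : S ∉ Module.End.invtSubmodule (m.mul a)) :
    S < LinearMap.ker m.mul ∧ LinearMap.ker m.mul < ⊤ := by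
  have hle : S ≤ LinearMap.ker m.mul :=
    not_not.1 (mt (hS.mem_invtSubmodule_of_not_le_ker_mul hcyc) hinv)
  have hne : S ≠ LinearMap.ker m.mul := fun h => hinv (h ▸ ker_mul_mem_invtSubmodule hcyc)
  refine ⟨hle.lt_of_ne hne, lt_top_iff_ne_top.2 fun htop => hinv fun x _ => ?_⟩
  rw [Submodule.mem_comap, LinearMap.ker_eq_top.1 htop]
  exact S.zero_mem

theorem isMaxSubalg_iff_isCoatom (hcyc : m.subalgGen a = ⊤) {M : Submodule K A} :
    m.IsMaxSubalg M ↔ ∃ hM : M ∈ Module.End.invtSubmodule (m.mul a),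
      IsCoatom (⟨M, hM⟩ : Module.End.invtSubmodule (m.mul a)) := by
  have hker := ker_mul_mem_invtSubmodule hcyc
  constructor
  · rintro ⟨hsub, hne, hmax⟩
    have hM : M ∈ Module.End.invtSubmodule (m.mul a) := by
      by_contra hinv
      obtain ⟨hlt, hlt_top⟩ := hsub.lt_ker_mul_and_lt_top_of_notMem_invtSubmodule hcyc hinv
      exact hlt_top.ne (hmax _ (isSubalg_of_mem_invtSubmodule hcyc hker) hlt)
    exact ⟨hM, fun h => hne (congrArg Subtype.val h), fun S hlt =>
      Subtype.ext (hmax S (isSubalg_of_mem_invtSubmodule hcyc S.2) hlt)⟩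
  · rintro ⟨hM, hne, hmax⟩
    have heq_top {S : Submodule K A} (hS : S ∈ Module.End.invtSubmodule (m.mul a)) (hlt : M < S) :
        S = ⊤ := congrArg Subtype.val (hmax ⟨S, hS⟩ hlt)
    refine ⟨isSubalg_of_mem_invtSubmodule hcyc hM, fun h => hne (Subtype.ext h),
      fun S hS hlt => heq_top ?_ hlt⟩
    by_contra hinv
    obtain ⟨hlt_ker, hlt_top⟩ := hS.lt_ker_mul_and_lt_top_of_notMem_invtSubmodule hcyc hinv
    exact hlt_top.ne (heq_top hker (hlt.trans hlt_ker))

theorem mem_frattini_iff_of_mem_jacobson_aeval (hcyc : m.subalgGen a = ⊤) {b : A} :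
    b ∈ m.frattini ↔
      Module.AEval'.of (m.mul a) b ∈ Module.jacobson K[X] (Module.AEval' (m.mul a)) := by
  rw [frattini, Module.jacobson, Submodule.mem_sInf, Submodule.mem_sInf]
  simp only [Set.mem_ofPred_eq, isMaxSubalg_iff_isCoatom hcyc, forall_exists_index]
  rw [(invtSubmoduleOrderIso (m.mul a)).surjective.forall]
  simp only [of_mem_invtSubmoduleOrderIso, OrderIso.isCoatom_iff, Subtype.forall]

theorem span_aeval_of_eq_top (hcyc : m.subalgGen a = ⊤) :
    Submodule.span K[X] {Module.AEval'.of (m.mul a) a} = ⊤ := by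
  obtain ⟨S, hS⟩ := (invtSubmoduleOrderIso (m.mul a)).surjective
    (Submodule.span K[X] {Module.AEval'.of (m.mul a) a})
  have ha : a ∈ (S : Submodule K A) :=
    of_mem_invtSubmoduleOrderIso.1 (hS ▸ Submodule.mem_span_singleton_self _)
  have htop : S = ⊤ :=
    Subtype.ext ((isSubalg_of_mem_invtSubmodule hcyc S.2).eq_top_of_mem hcyc ha)
  rw [← hS, htop, map_top]

theorem frattini_eq_ker_aeval_divRadical_charpoly [DecidableEq K] [FiniteDimensional K A]
    (hcyc : m.subalgGen a = ⊤) :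
    m.frattini = LinearMap.ker (aeval (m.mul a) (divRadical (m.mul a).charpoly)) := by
  have hspan := span_aeval_of_eq_top hcyc
  have hann : Module.annihilator K[X] (Module.AEval' (m.mul a)) =
      Ideal.span {(m.mul a).charpoly} := by
    rw [← minpoly_eq_charpoly_of_span_singleton_eq_top hspan, span_minpoly_eq_annihilator]
  ext b
  rw [mem_frattini_iff_of_mem_jacobson_aeval hcyc,
    jacobson_eq_torsionBy_divRadical hspan (m.mul a).charpoly_monic.ne_zero hann,
    Submodule.mem_torsionBy_iff, ← Module.AEval.of_aeval_smul, LinearEquiv.map_eq_zero_iff,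
    LinearMap.mem_ker, Module.End.smul_def]

end LeibnizMul

/-- for a cyclic Leibniz algebra generated by `a` with
`charpoly(L_a) = p₁^{n₁} ⋯ p_s^{n_s}`, the Frattini subalgebra is the kernel of
`q(L_a)` where `q = p₁^{n₁-1} ⋯ p_s^{n_s-1}`. -/
theorem stmt9 {K A : Type*} [Field K] [AddCommGroup A] [Module K A] [FiniteDimensional K A]
    (m : LeibnizMul K A) (a : A) (hcyc : m.subalgGen a = ⊤)
    (s : ℕ) (p : Fin s → Polynomial K) (e : Fin s → ℕ)
    (hirr : ∀ j, Irreducible (p j)) (hmonic : ∀ j, (p j).Monic)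
    (hdist : Function.Injective p) (hpos : ∀ j, 1 ≤ e j)
    (hfact : LinearMap.charpoly (m.mul a) = ∏ j, p j ^ e j) :
    m.frattini =
      LinearMap.ker (Polynomial.aeval (m.mul a) (∏ j, p j ^ (e j - 1))) := by
  classical
  have hprod : divRadical (∏ j, p j ^ e j) = ∏ j, p j ^ (e j - 1) :=
    divRadical_prod_pow_of_irreducible Finset.univ (fun j _ => hirr j)
      (fun j _ => (hmonic j).normalize_eq_self) hdist.injOn
      fun j _ => Nat.one_le_iff_ne_zero.1 (hpos j)
  rw [LeibnizMul.frattini_eq_ker_aeval_divRadical_charpoly hcyc, hfact, hprod]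
end

section
/- Let A be a finite-dimensional cyclic left Leibniz algebra generated by a. Then the Fitting null component A₀ of the operator L_a (left multiplication by a) acting on A is a nilpotent subalgebra of A. -/
open Polynomial LinearMap

/-! Since `L_{xy} = ⁅L_x, L_y⁆` vanishes whenever `L_x` and `L_y` are multiples of `L_a`, the
elements `x` with `L_x ∈ K L_a` form a subalgebra. So in a cyclic algebra every left multiplication
is a multiple of `L_a`, and the `(n+1)`-st power of a subspace `S` lies in `L_a ^ n S`. It follows
that `A` is a cyclic `K[X]`-module, with `X` acting as `L_a`. It is therefore Noetherian, even if
`A` has infinite dimension over `K`, and a single power of `L_a` vanishes on the Fitting null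
component, which is a subalgebra because `L_a` is a derivation. -/

theorem exists_iSup_ker_pow_eq_ker_pow {R M : Type*} [CommRing R] [AddCommGroup M] [Module R M]
    (f : Module.End R M) [IsNoetherian R[X] (Module.AEval' f)] :
    ∃ n, ⨆ k, ker (f ^ k) = ker (f ^ n) := by
  let g : Module.End R[X] (Module.AEval' f) := Algebra.lsmul R[X] R[X] _ (X : R[X])
  have of_mem_ker (k : ℕ) (x : M) : Module.AEval'.of f x ∈ ker (g ^ k) ↔ x ∈ ker (f ^ k) := by
    rw [← map_pow, mem_ker, mem_ker, Algebra.lsmul_apply, Module.AEval'.X_pow_smul_of,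
      LinearEquiv.map_eq_zero_iff, Module.End.smul_def]
  obtain ⟨n, hn⟩ := g.eventually_iSup_ker_pow_eq.exists
  refine ⟨n, le_antisymm (iSup_le fun k x hx ↦ ?_) (le_iSup (fun k ↦ ker (f ^ k)) n)⟩
  rw [← of_mem_ker, ← hn]
  exact Submodule.mem_iSup_of_mem k ((of_mem_ker k x).2 hx)

namespace LeibnizMul

variable {K A : Type*} [Field K] [AddCommGroup A] [Module K A]

theorem mul_mul_eq_lie (m : LeibnizMul K A) (x y : A) :
    m.mul (m.mul x y) = ⁅m.mul x, m.mul y⁆ := by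
  ext z
  rw [Ring.lie_def, LinearMap.sub_apply, Module.End.mul_apply, Module.End.mul_apply,
    m.leibniz x y z, add_sub_cancel_right]

theorem subalgGen_le {m : LeibnizMul K A} {a : A} {S : Submodule K A} (hS : m.IsSubalg S)
    (ha : a ∈ S) : m.subalgGen a ≤ S :=
  sInf_le ⟨hS, ha⟩

theorem mul_mem_span_singleton_of_mem_subalgGen {m : LeibnizMul K A} {a x : A}
    (hx : x ∈ m.subalgGen a) : m.mul x ∈ K ∙ m.mul a := by
  have isSubalg : m.IsSubalg ((K ∙ m.mul a).comap m.mul) := by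
    intro y hy z hz
    obtain ⟨c, hc⟩ := Submodule.mem_span_singleton.1 hy
    obtain ⟨d, hd⟩ := Submodule.mem_span_singleton.1 hz
    have hyz : Commute (m.mul y) (m.mul z) :=
      hc ▸ hd ▸ ((Commute.refl _).smul_left c).smul_right d
    rw [Submodule.mem_comap, mul_mul_eq_lie, hyz.lie_eq]
    exact Submodule.zero_mem _
  exact subalgGen_le isSubalg (Submodule.mem_span_singleton_self _) hx

theorem pow_add_mul_apply_eq_zero (m : LeibnizMul K A) (a : A) {x y : A} (i j : ℕ)
    (hx : (m.mul a ^ i) x = 0) (hy : (m.mul a ^ j) y = 0) :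
    (m.mul a ^ (i + j)) (m.mul x y) = 0 := by
  induction i generalizing x y j with
  | zero => rw [show x = 0 from hx, map_zero, LinearMap.zero_apply, map_zero]
  | succ i ihi =>
    induction j generalizing y with
    | zero => rw [show y = 0 from hy, map_zero, map_zero]
    | succ j ihj =>
      have hleft : (m.mul a ^ (i + (j + 1))) (m.mul (m.mul a x) y) = 0 :=
        ihi (j + 1) (by rwa [pow_succ] at hx) hy
      have hright : (m.mul a ^ (i + 1 + j)) (m.mul x (m.mul a y)) = 0 :=
        ihj (by rwa [pow_succ] at hy)
      rw [← add_assoc, pow_succ, Module.End.mul_apply, m.leibniz, map_add, hright, add_zero,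
        add_right_comm, add_assoc, hleft]

theorem mem_fittingNull {m : LeibnizMul K A} {a x : A} :
    x ∈ m.fittingNull a ↔ ∃ k, (m.mul a ^ k) x = 0 :=
  Submodule.mem_iSup_of_chain (m.mul a).iterateKer x

theorem isSubalg_fittingNull (m : LeibnizMul K A) (a : A) : m.IsSubalg (m.fittingNull a) := by
  intro x hx y hy
  obtain ⟨i, hi⟩ := mem_fittingNull.1 hx
  obtain ⟨j, hj⟩ := mem_fittingNull.1 hy
  exact mem_fittingNull.2 ⟨i + j, m.pow_add_mul_apply_eq_zero a i j hi hj⟩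

theorem lcsIn_le_map_pow {m : LeibnizMul K A} {a : A} {S : Submodule K A}
    (hS : ∀ x ∈ S, m.mul x ∈ K ∙ m.mul a) (n : ℕ) : m.lcsIn S n ≤ S.map (m.mul a ^ n) := by
  induction n with
  | zero => exact (Submodule.map_id S).ge
  | succ n ih =>
    refine Submodule.span_le.2 ?_
    rintro _ ⟨x, hx, y, hy, rfl⟩
    obtain ⟨c, hc⟩ := Submodule.mem_span_singleton.1 (hS x hx)
    obtain ⟨z, hz, rfl⟩ := ih hy
    refine ⟨c • z, S.smul_mem c hz, ?_⟩
    simp only [← hc, map_smul, pow_succ', Module.End.mul_apply, LinearMap.smul_apply]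

theorem span_polynomial_singleton_eq_top {m : LeibnizMul K A} {a : A} (hcyc : m.subalgGen a = ⊤) :
    K[X] ∙ Module.AEval'.of (m.mul a) a = ⊤ := by
  let of := Module.AEval'.of (m.mul a)
  let S : Submodule K A := ((K[X] ∙ of a).restrictScalars K).comap of.toLinearMap
  have isSubalg : m.IsSubalg S := by
    intro x _ y hy
    have hx : x ∈ m.subalgGen a := hcyc ▸ Submodule.mem_top
    obtain ⟨c, hc⟩ :=
      Submodule.mem_span_singleton.1 (mul_mem_span_singleton_of_mem_subalgGen hx)
    have hay : m.mul a y ∈ S := by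
      change of (m.mul a y) ∈ K[X] ∙ of a
      rw [← Module.AEval'.X_smul_of]
      exact Submodule.smul_mem _ X hy
    rw [← hc]
    exact S.smul_mem c hay
  have ha : a ∈ S := Submodule.mem_span_singleton_self (R := K[X]) (of a)
  have top_le : ⊤ ≤ S := hcyc ▸ subalgGen_le isSubalg ha
  refine eq_top_iff.2 fun x _ ↦ ?_
  rw [← of.apply_symm_apply x]
  exact top_le Submodule.mem_top

theorem isNoetherian_aeval'_mul {m : LeibnizMul K A} {a : A} (hcyc : m.subalgGen a = ⊤) :
    IsNoetherian K[X] (Module.AEval' (m.mul a)) := by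
  have : Module.Finite K[X] (Module.AEval' (m.mul a)) :=
    ⟨span_polynomial_singleton_eq_top hcyc ▸ Submodule.fg_span_singleton _⟩
  infer_instance

end LeibnizMul

theorem stmt12_general {K A : Type*} [Field K] [AddCommGroup A] [Module K A]
    (m : LeibnizMul K A) (a : A) (hcyc : m.subalgGen a = ⊤) :
    m.IsSubalg (m.fittingNull a) ∧ ∃ n, m.lcsIn (m.fittingNull a) n = ⊥ := by
  have := LeibnizMul.isNoetherian_aeval'_mul hcyc
  obtain ⟨n, hn⟩ : ∃ n, m.fittingNull a = ker (m.mul a ^ n) :=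
    exists_iSup_ker_pow_eq_ker_pow (m.mul a)
  have hmul (x : A) : m.mul x ∈ K ∙ m.mul a :=
    LeibnizMul.mul_mem_span_singleton_of_mem_subalgGen (hcyc ▸ Submodule.mem_top)
  refine ⟨m.isSubalg_fittingNull a, n, eq_bot_iff.2 ?_⟩
  calc m.lcsIn (m.fittingNull a) n
      ≤ (m.fittingNull a).map (m.mul a ^ n) := LeibnizMul.lcsIn_le_map_pow (fun x _ ↦ hmul x) n
    _ = ⊥ := by rw [hn, ← le_ker_iff_map]

/-- in a cyclic Leibniz algebra generated by `a`, the Fitting null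
component of `L_a` is a nilpotent subalgebra. -/
theorem stmt12 {K A : Type*} [Field K] [AddCommGroup A] [Module K A] [FiniteDimensional K A]
    (m : LeibnizMul K A) (a : A) (hcyc : m.subalgGen a = ⊤) :
    m.IsSubalg (m.fittingNull a) ∧ ∃ n, m.lcsIn (m.fittingNull a) n = ⊥ :=
  stmt12_general m a hcyc
end

section
/- Let A be a left Leibniz algebra that is an ideal of a left Leibniz algebra L. Then each term Z_j(A) of the upper central series of A is an ideal of L. -/
open Polynomial LinearMap

/-! If `x` normalizes both `S` and `T`, then it normalizes `{z ∈ S : zS ⊆ T and Sz ⊆ T}`: by the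
Leibniz identity, the products of `s ∈ S` with `xz` and `zx` are sums and differences of products
of `x` with `zs` or `sz`, which lie in `T`, and of `z` with `xs` or `sx`, which lie in `S`. By
induction from `Z₀ = 0`, whatever normalizes a subspace normalizes its whole upper central series,
and a subspace is an ideal exactly when every element of the algebra normalizes it. -/

namespace LeibnizMul

variable {K L : Type*} [Field K] [AddCommGroup L] [Module K L]
  {m : LeibnizMul K L} {S T : Submodule K L} {x z : L}

theorem mul_mul_eq_sub (m : LeibnizMul K L) (x y z : L) :
    m.mul (m.mul x y) z = m.mul x (m.mul y z) - m.mul y (m.mul x z) :=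
  eq_sub_of_add_eq (m.leibniz x y z).symm

theorem mem_normalizer :
    x ∈ m.normalizer S ↔ ∀ s ∈ S, m.mul x s ∈ S ∧ m.mul s x ∈ S := by
  simp [normalizer]

theorem mem_relCentralizer :
    z ∈ m.relCentralizer S T ↔ z ∈ S ∧ ∀ s ∈ S, m.mul z s ∈ T ∧ m.mul s z ∈ T := by
  simp [relCentralizer]

theorem isIdeal_iff_normalizer_eq_top : m.IsIdeal S ↔ m.normalizer S = ⊤ := by
  simp only [IsIdeal, Submodule.eq_top_iff', mem_normalizer]

theorem normalizer_bot : m.normalizer ⊥ = ⊤ := by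
  simp [Submodule.eq_top_iff', mem_normalizer]

theorem normalizer_inf_normalizer_le_normalizer_relCentralizer (m : LeibnizMul K L)
    (S T : Submodule K L) :
    m.normalizer S ⊓ m.normalizer T ≤ m.normalizer (m.relCentralizer S T) := by
  rintro x ⟨hxS, hxT⟩
  rw [SetLike.mem_coe, mem_normalizer] at hxS hxT
  refine mem_normalizer.2 fun z hz => ?_
  obtain ⟨hzS, hzT⟩ := mem_relCentralizer.1 hz
  have left_mem : m.mul x z ∈ m.relCentralizer S T := by
    refine mem_relCentralizer.2 ⟨(hxS z hzS).1, fun s hs => ⟨?_, ?_⟩⟩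
    · rw [mul_mul_eq_sub m x z s]
      exact sub_mem (hxT _ (hzT s hs).1).1 (hzT _ (hxS s hs).1).1
    · rw [m.leibniz s x z]
      exact add_mem (hzT _ (hxS s hs).2).2 (hxT _ (hzT s hs).2).1
  have right_mem : m.mul z x ∈ m.relCentralizer S T := by
    refine mem_relCentralizer.2 ⟨(hxS z hzS).2, fun s hs => ⟨?_, ?_⟩⟩
    · rw [mul_mul_eq_sub m z x s]
      exact sub_mem (hzT _ (hxS s hs).1).1 (hxT _ (hzT s hs).1).1
    · rw [m.leibniz s z x]
      exact add_mem (hxT _ (hzT s hs).2).2 (hzT _ (hxS s hs).2).1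
  exact ⟨left_mem, right_mem⟩

end LeibnizMul

theorem stmt18_general {K L : Type*} [Field K] [AddCommGroup L] [Module K L]
    (m : LeibnizMul K L) (B : Submodule K L) (j : ℕ) :
    m.normalizer B ≤ m.normalizer (m.ucsIn B j) := by
  induction j with
  | zero => exact le_top.trans_eq LeibnizMul.normalizer_bot.symm
  | succ j ih =>
    exact (le_inf le_rfl ih).trans
      (m.normalizer_inf_normalizer_le_normalizer_relCentralizer B (m.ucsIn B j))

/-- if `B` is an ideal of the Leibniz algebra `L`, then each term of the
upper central series of `B` is an ideal of `L`. -/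
theorem stmt18 {K L : Type*} [Field K] [AddCommGroup L] [Module K L]
    (m : LeibnizMul K L) (B : Submodule K L) (hB : m.IsIdeal B) :
    ∀ j : ℕ, m.IsIdeal (m.ucsIn B j) := by
  intro j
  exact LeibnizMul.isIdeal_iff_normalizer_eq_top.2 <| eq_top_mono (stmt18_general m B j) <|
    LeibnizMul.isIdeal_iff_normalizer_eq_top.1 hB
end
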